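/- Let r(i,j) ≥ 1 be scalars for each machine i and job j such that Σ_{i : max_j r(i,j) > 1} (max_j r(i,j)) ≤ n/γ for some γ > 0, and let x be any allocation that assigns each job j to a machine i_j minimizing r(i,j)·p(i,j) over all machines i. Then MS(p, x) ≤ (1 + 1/γ)·n·OPT(p). Since the scalars of ScaledGreedy at termination satisfy these conditions, ScaledGreedy with parameter γ > 0 is (1 + 1/γ)n-robust: for every instance p and prediction p̂, its output allocation x satisfies MS(p, x) ≤ (1 + 1/γ)·n·OPT(p). -/

import Mathlib

open scoped Classical
noncomputable section
variable {n m : ℕ}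

/-- The makespan of allocation `a` under instance `p`. -/
def MS [NeZero n] (p : Fin n → Fin m → ℝ) (a : Fin m → Fin n) : ℝ :=
  Finset.univ.sup' Finset.univ_nonempty fun i => ∑ j, if a j = i then p i j else 0

/-- The optimal makespan of instance `p`. -/
def OPT [NeZero n] (p : Fin n → Fin m → ℝ) : ℝ :=
  Finset.univ.inf' Finset.univ_nonempty fun a : Fin m → Fin n => MS p a

lemma exists_argmin [NeZero n] (v : Fin n → ℝ) :
    (Finset.univ.filter fun i => ∀ i', v i ≤ v i').Nonempty := by
  obtain ⟨i, -, hi⟩ := Finset.exists_min_image Finset.univ v Finset.univ_nonempty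
  exact ⟨i, by
    simp only [Finset.mem_filter, Finset.mem_univ, true_and]
    exact fun i' => hi i' (Finset.mem_univ i')⟩

/-- The state of the iterative loop of `ScaledGreedy`: the sets `J_i` and the scalars `r(i,j)`. -/
structure SGState (n m : ℕ) where
  J : Fin n → Finset (Fin m)
  r : Fin n → Fin m → ℝ

/-- The set `∪_i J_i` of jobs already put aside by the loop. -/
def sgAssigned (s : SGState n m) : Finset (Fin m) :=
  Finset.univ.filter fun j => ∃ i, j ∈ s.J i

/-- The set `I` of machines whose set `J_i` is not yet full. -/
def sgI [NeZero n] (phat : Fin n → Fin m → ℝ) (xhat : Fin m → Fin n) (γ : ℝ)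
    (s : SGState n m) : Finset (Fin n) :=
  Finset.univ.filter fun i => ∑ j ∈ s.J i, phat i j < γ * MS phat xhat

/-- The set `T` of candidate pairs `(i,j)`. -/
def sgT [NeZero n] (phat : Fin n → Fin m → ℝ) (xhat : Fin m → Fin n) (γ : ℝ)
    (s : SGState n m) : Finset (Fin n × Fin m) :=
  Finset.univ.filter fun q =>
    q.2 ∉ sgAssigned s ∧ q.1 ∈ sgI phat xhat γ s ∧
    phat q.1 q.2 < phat (xhat q.2) q.2 ∧
    ∀ i' ∈ sgI phat xhat γ s, phat i' q.2 < phat (xhat q.2) q.2 → phat q.1 q.2 ≤ phat i' q.2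

/-- The initial state of `ScaledGreedy`: `J_i = ∅` and `r(i,j) = max(p̂(î_j,j)/p̂(i,j), 1)`. -/
def sgInit (phat : Fin n → Fin m → ℝ) (xhat : Fin m → Fin n) : SGState n m :=
  ⟨fun _ => ∅, fun i j => max (phat (xhat j) j / phat i j) 1⟩

/-- One iteration of the while-loop of `ScaledGreedy`: a pair `(i*,j*) ∈ T` maximizing
`p̂(î_j,j)/p̂(i,j)` is selected, `j*` is added to `J_{i*}`, and `r(i,j*)` is set to `1` for
every machine `i` with `p̂(i*,j*) ≤ p̂(i,j*)`. -/
def SGStep [NeZero n] (phat : Fin n → Fin m → ℝ) (xhat : Fin m → Fin n) (γ : ℝ)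
    (s s' : SGState n m) : Prop :=
  ∃ q ∈ sgT phat xhat γ s,
    (∀ q' ∈ sgT phat xhat γ s,
      phat (xhat q'.2) q'.2 / phat q'.1 q'.2 ≤ phat (xhat q.2) q.2 / phat q.1 q.2) ∧
    s'.J = (fun i => if i = q.1 then insert q.2 (s.J i) else s.J i) ∧
    s'.r = fun i j => if j = q.2 ∧ phat q.1 q.2 ≤ phat i q.2 then 1 else s.r i j

/-- `s` is the state of `ScaledGreedy` at termination: it is reachable from the initial state
by iterations of the loop, and `T = ∅` so the loop has terminated. -/
def SGFinal [NeZero n] (phat : Fin n → Fin m → ℝ) (xhat : Fin m → Fin n) (γ : ℝ)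
    (s : SGState n m) : Prop :=
  Relation.ReflTransGen (SGStep phat xhat γ) (sgInit phat xhat) s ∧ sgT phat xhat γ s = ∅

/-- The allocation computed by `ScaledGreedy` from the terminal state `s`: each job `j` goes to
a machine minimizing `r(i,j)·p(i,j)`, with ties broken in favor of `î_j` first, then the machine
`i'` with `j ∈ J_{i'}` (if any), then the smallest-index machine. -/
def sgAssign [NeZero n] (s : SGState n m) (xhat : Fin m → Fin n)
    (p : Fin n → Fin m → ℝ) (j : Fin m) : Fin n :=
  let v : Fin n → ℝ := fun i => s.r i j * p i j
  if ∀ i, v (xhat j) ≤ v i then xhat j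
  else if h : ∃ i', j ∈ s.J i' ∧ ∀ i, v i' ≤ v i then Classical.choose h
  else (Finset.univ.filter fun i => ∀ i', v i ≤ v i').min' (exists_argmin v)

/-- `max_j r(i,j)`, the largest scalar of machine `i`. -/
def maxScalar [NeZero m] (r : Fin n → Fin m → ℝ) (i : Fin n) : ℝ :=
  Finset.univ.sup' Finset.univ_nonempty fun j => r i j

/-!
For any weights `w ≥ 0`, grouping jobs by machine gives
`∑ j, w (a j) * p (a j) j ≤ (∑ i, w i) * MS p a`. Taking `w = maxScalar r` and `a` optimal bounds
the total work of a greedy allocation, hence its makespan, by `(∑ i, maxScalar r i) * OPT p`;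
machines whose scalars are all `1` contribute at most `n` to the weight sum, the others at most
`n / γ`.

For the scalars of `ScaledGreedy`, call `p̂(î_j,j) / p̂(i,j)` the ratio of `(i,j)`. The loop always
selects a pair of largest ratio, so every scalar of machine `i` is at most the ratio of every job
in `J_i`. A machine that ends with a scalar above `1` has a full set `J_i`, so the `p̂(î_j,j)` with
`j ∈ J_i` sum to at least `maxScalar r i * γ * MS p̂ x̂`. As the `J_i` are disjoint, all these sums
together are at most `n * MS p̂ x̂`.
-/

theorem sum_le_card_add_sum_filter_one_lt {ι : Type*} [Fintype ι] (f : ι → ℝ) :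
    ∑ i, f i ≤ Fintype.card ι + ∑ i with 1 < f i, f i := by
  calc ∑ i, f i ≤ ∑ i, (1 + if 1 < f i then f i else 0) := by
        gcongr with i
        split_ifs with hi <;> linarith
    _ = Fintype.card ι + ∑ i with 1 < f i, f i := by
        simp [Finset.sum_add_distrib, Finset.sum_filter]

theorem sum_sum_le_sum_of_pairwise_disjoint {ι κ : Type*} [Fintype κ] {J : ι → Finset κ}
    (hJ : Pairwise (Function.onFun Disjoint J)) {f : κ → ℝ} (hf : ∀ j, 0 ≤ f j) (S : Finset ι) :
    ∑ i ∈ S, ∑ j ∈ J i, f j ≤ ∑ j, f j := by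
  rw [← Finset.sum_biUnion (hJ.set_pairwise S)]
  exact Finset.sum_le_univ_sum_of_nonneg hf

section Makespan

variable {p : Fin n → Fin m → ℝ}

/-- The load of machine `i` under allocation `a`: the total processing time of the jobs that `a`
sends to `i`, written in the form in which it occurs in `MS`. -/
def machineLoad (p : Fin n → Fin m → ℝ) (a : Fin m → Fin n) (i : Fin n) : ℝ :=
  ∑ j, if a j = i then p i j else 0

theorem sum_mul_machineLoad (w : Fin n → ℝ) (p : Fin n → Fin m → ℝ) (a : Fin m → Fin n) :
    ∑ i, w i * machineLoad p a i = ∑ j, w (a j) * p (a j) j := by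
  simp_rw [machineLoad, Finset.mul_sum]
  rw [Finset.sum_comm]
  simp

theorem machineLoad_le_sum (hp : ∀ i j, 0 ≤ p i j) (a : Fin m → Fin n) (i : Fin n) :
    machineLoad p a i ≤ ∑ j, p (a j) j := by
  refine Finset.sum_le_sum fun j _ => ?_
  split_ifs with h
  · rw [h]
  · exact hp _ _

variable [NeZero n]

theorem machineLoad_le_MS (p : Fin n → Fin m → ℝ) (a : Fin m → Fin n) (i : Fin n) :
    machineLoad p a i ≤ MS p a :=
  Finset.le_sup' (machineLoad p a) (Finset.mem_univ i)

theorem MS_le_sum (hp : ∀ i j, 0 ≤ p i j) (a : Fin m → Fin n) : MS p a ≤ ∑ j, p (a j) j :=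
  Finset.sup'_le _ _ fun i _ => machineLoad_le_sum hp a i

theorem sum_mul_le_sum_mul_MS {w : Fin n → ℝ} (hw : ∀ i, 0 ≤ w i)
    (p : Fin n → Fin m → ℝ) (a : Fin m → Fin n) :
    ∑ j, w (a j) * p (a j) j ≤ (∑ i, w i) * MS p a := by
  rw [← sum_mul_machineLoad, Finset.sum_mul]
  gcongr with i
  · exact hw i
  · exact machineLoad_le_MS p a i

theorem sum_le_card_mul_MS (p : Fin n → Fin m → ℝ) (a : Fin m → Fin n) :
    ∑ j, p (a j) j ≤ n * MS p a := by
  simpa using sum_mul_le_sum_mul_MS (w := 1) (fun _ => zero_le_one) p a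

theorem MS_nonneg (hp : ∀ i j, 0 ≤ p i j) (a : Fin m → Fin n) : 0 ≤ MS p a := by
  refine le_trans (Finset.sum_nonneg fun j _ => ?_) (machineLoad_le_MS p a 0)
  split_ifs
  exacts [hp _ _, le_rfl]

theorem MS_pos [NeZero m] (hp : ∀ i j, 0 < p i j) (a : Fin m → Fin n) : 0 < MS p a := by
  have hsum : 0 < ∑ j, p (a j) j := Finset.sum_pos (fun j _ => hp _ _) Finset.univ_nonempty
  exact pos_of_mul_pos_right (hsum.trans_le (sum_le_card_mul_MS p a)) n.cast_nonneg

theorem exists_MS_eq_OPT (p : Fin n → Fin m → ℝ) : ∃ a, MS p a = OPT p := by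
  obtain ⟨a, -, ha⟩ := Finset.exists_mem_eq_inf' Finset.univ_nonempty (MS p)
  exact ⟨a, ha.symm⟩

end Makespan

section ScaledAllocation

variable [NeZero m] {p r : Fin n → Fin m → ℝ} {x : Fin m → Fin n}

theorem le_maxScalar (r : Fin n → Fin m → ℝ) (i : Fin n) (j : Fin m) : r i j ≤ maxScalar r i :=
  Finset.le_sup' (r i) (Finset.mem_univ j)

theorem exists_eq_maxScalar (r : Fin n → Fin m → ℝ) (i : Fin n) : ∃ j, r i j = maxScalar r i := by
  obtain ⟨j, -, hj⟩ := Finset.exists_mem_eq_sup' Finset.univ_nonempty (r i)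
  exact ⟨j, hj.symm⟩

theorem one_le_maxScalar (hr : ∀ i j, 1 ≤ r i j) (i : Fin n) : 1 ≤ maxScalar r i :=
  (hr i 0).trans (le_maxScalar r i 0)

variable [NeZero n]

theorem MS_le_sum_maxScalar_mul_MS (hp : ∀ i j, 0 ≤ p i j) (hr : ∀ i j, 1 ≤ r i j)
    (hx : ∀ j i, r (x j) j * p (x j) j ≤ r i j * p i j) (a : Fin m → Fin n) :
    MS p x ≤ (∑ i, maxScalar r i) * MS p a := by
  calc MS p x ≤ ∑ j, p (x j) j := MS_le_sum hp x
    _ ≤ ∑ j, maxScalar r (a j) * p (a j) j := Finset.sum_le_sum fun j _ =>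
        calc p (x j) j ≤ r (x j) j * p (x j) j := le_mul_of_one_le_left (hp _ _) (hr _ _)
          _ ≤ r (a j) j * p (a j) j := hx j (a j)
          _ ≤ maxScalar r (a j) * p (a j) j :=
              mul_le_mul_of_nonneg_right (le_maxScalar r _ j) (hp _ _)
    _ ≤ (∑ i, maxScalar r i) * MS p a :=
        sum_mul_le_sum_mul_MS (fun i => zero_le_one.trans (one_le_maxScalar hr i)) p a

theorem MS_le_mul_OPT_of_sum_maxScalar_le {γ : ℝ} (hp : ∀ i j, 0 ≤ p i j)
    (hr : ∀ i j, 1 ≤ r i j) (hsum : ∑ i with 1 < maxScalar r i, maxScalar r i ≤ n / γ)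
    (hx : ∀ j i, r (x j) j * p (x j) j ≤ r i j * p i j) :
    MS p x ≤ (1 + 1 / γ) * n * OPT p := by
  obtain ⟨a, ha⟩ := exists_MS_eq_OPT p
  have hweights : ∑ i, maxScalar r i ≤ (1 + 1 / γ) * n :=
    calc ∑ i, maxScalar r i ≤ n + ∑ i with 1 < maxScalar r i, maxScalar r i := by
          simpa using sum_le_card_add_sum_filter_one_lt (maxScalar r)
      _ ≤ n + n / γ := by gcongr
      _ = (1 + 1 / γ) * n := by ring
  rw [← ha]
  exact (MS_le_sum_maxScalar_mul_MS hp hr hx a).trans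
    (mul_le_mul_of_nonneg_right hweights (MS_nonneg hp a))

end ScaledAllocation

section Loop

variable {phat : Fin n → Fin m → ℝ} {xhat : Fin m → Fin n} {γ : ℝ} {s s' : SGState n m}
  {q : Fin n × Fin m} {i : Fin n} {j : Fin m}

/-- The ratio `p̂(î_j,j) / p̂(i,j)` by which the loop ranks the pairs `(i,j)`. -/
def predictedRatio (phat : Fin n → Fin m → ℝ) (xhat : Fin m → Fin n) (i : Fin n) (j : Fin m) : ℝ :=
  phat (xhat j) j / phat i j

/-- The state update of one loop iteration that selects the pair `q`, separated from the choice
of `q` in `SGStep`. -/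
def SGState.select (s : SGState n m) (phat : Fin n → Fin m → ℝ) (q : Fin n × Fin m) :
    SGState n m where
  J i := if i = q.1 then insert q.2 (s.J i) else s.J i
  r i j := if j = q.2 ∧ phat q.1 q.2 ≤ phat i q.2 then 1 else s.r i j

theorem SGStep.exists_eq_select [NeZero n] (h : SGStep phat xhat γ s s') :
    ∃ q ∈ sgT phat xhat γ s,
      (∀ q' ∈ sgT phat xhat γ s,
        predictedRatio phat xhat q'.1 q'.2 ≤ predictedRatio phat xhat q.1 q.2) ∧
      s' = s.select phat q := by
  obtain ⟨q, hq, hmax, hJ, hr⟩ := h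
  cases s'
  subst hJ hr
  exact ⟨q, hq, hmax, rfl⟩

theorem mem_sgAssigned : j ∈ sgAssigned s ↔ ∃ i, j ∈ s.J i := by
  simp [sgAssigned]

theorem SGState.mem_select_J : j ∈ (s.select phat q).J i ↔ (i = q.1 ∧ j = q.2) ∨ j ∈ s.J i := by
  by_cases h : i = q.1 <;> simp [SGState.select, h]

theorem SGState.mem_sgAssigned_select :
    j ∈ sgAssigned (s.select phat q) ↔ j = q.2 ∨ j ∈ sgAssigned s := by
  simp [mem_sgAssigned, SGState.mem_select_J, exists_or]

theorem SGState.one_le_select_r (h : 1 ≤ s.r i j) : 1 ≤ (s.select phat q).r i j := by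
  dsimp only [SGState.select]
  split_ifs
  exacts [le_rfl, h]

theorem SGState.select_r_le (h : 1 ≤ s.r i j) : (s.select phat q).r i j ≤ s.r i j := by
  dsimp only [SGState.select]
  split_ifs
  exacts [h, le_rfl]

theorem SGState.lt_of_one_lt_select_r (h : 1 < (s.select phat q).r i q.2) :
    phat i q.2 < phat q.1 q.2 := by
  contrapose! h
  simp [SGState.select, h]

variable [NeZero n]

theorem mem_sgI : i ∈ sgI phat xhat γ s ↔ ∑ j ∈ s.J i, phat i j < γ * MS phat xhat := by
  simp [sgI]

theorem mem_sgT : q ∈ sgT phat xhat γ s ↔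
    q.2 ∉ sgAssigned s ∧ q.1 ∈ sgI phat xhat γ s ∧ phat q.1 q.2 < phat (xhat q.2) q.2 ∧
    ∀ i ∈ sgI phat xhat γ s, phat i q.2 < phat (xhat q.2) q.2 → phat q.1 q.2 ≤ phat i q.2 := by
  simp [sgT]

theorem SGState.sgI_select_subset (hphat : ∀ i j, 0 ≤ phat i j) :
    sgI phat xhat γ (s.select phat q) ⊆ sgI phat xhat γ s := by
  intro i hi
  rw [mem_sgI] at hi ⊢
  refine lt_of_le_of_lt ?_ hi
  exact Finset.sum_le_sum_of_subset_of_nonneg (fun j hj => SGState.mem_select_J.2 (Or.inr hj))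
    fun j _ _ => hphat i j

theorem exists_mem_sgT_le (hi : i ∈ sgI phat xhat γ s) (hj : j ∉ sgAssigned s)
    (hlt : phat i j < phat (xhat j) j) :
    ∃ k, (k, j) ∈ sgT phat xhat γ s ∧ phat k j ≤ phat i j := by
  obtain ⟨k, hk, hmin⟩ := Finset.exists_min_image (sgI phat xhat γ s) (phat · j) ⟨i, hi⟩
  exact ⟨k, mem_sgT.2 ⟨hj, hk, (hmin i hi).trans_lt hlt, fun i' hi' _ => hmin i' hi'⟩, hmin i hi⟩

/-- The loop invariant of `ScaledGreedy`. The field `notMem_sgI` says that a scalar of an already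
assigned job can exceed `1` only on a full machine; `r_le_ratio_of_mem` records that the
loop always selects a pair of largest ratio. -/
structure SGInvariant (phat : Fin n → Fin m → ℝ) (xhat : Fin m → Fin n) (γ : ℝ)
    (s : SGState n m) : Prop where
  disjoint : Pairwise (Function.onFun Disjoint s.J)
  one_le : ∀ i j, 1 ≤ s.r i j
  r_le_max : ∀ i j, s.r i j ≤ max (predictedRatio phat xhat i j) 1
  notMem_sgI : ∀ i j, 1 < s.r i j → j ∈ sgAssigned s → i ∉ sgI phat xhat γ s
  r_le_ratio_of_mem : ∀ i j k, j ∈ s.J i → s.r i k ≤ predictedRatio phat xhat i j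

namespace SGInvariant

theorem init (phat : Fin n → Fin m → ℝ) (xhat : Fin m → Fin n) (γ : ℝ) :
    SGInvariant phat xhat γ (sgInit phat xhat) where
  disjoint _ _ _ := Finset.disjoint_empty_left _
  one_le _ _ := le_max_right _ _
  r_le_max _ _ := le_rfl
  notMem_sgI _ _ _ hj := by simp [mem_sgAssigned, sgInit] at hj
  r_le_ratio_of_mem _ _ _ hj := by simp [sgInit] at hj

theorem r_le_ratio_of_one_lt (hs : SGInvariant phat xhat γ s) (h : 1 < s.r i j) :
    s.r i j ≤ predictedRatio phat xhat i j :=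
  (le_max_iff.1 (hs.r_le_max i j)).resolve_right h.not_ge

theorem lt_of_one_lt (hs : SGInvariant phat xhat γ s) (hphat : ∀ i j, 0 < phat i j)
    (h : 1 < s.r i j) : phat i j < phat (xhat j) j :=
  (one_lt_div (hphat i j)).1 (h.trans_le (hs.r_le_ratio_of_one_lt h))

theorem exists_mem_sgT (hs : SGInvariant phat xhat γ s) (hphat : ∀ i j, 0 < phat i j)
    (hi : i ∈ sgI phat xhat γ s) (h : 1 < s.r i j) :
    ∃ k, (k, j) ∈ sgT phat xhat γ s ∧ s.r i j ≤ predictedRatio phat xhat k j := by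
  have hj : j ∉ sgAssigned s := fun hj => hs.notMem_sgI i j h hj hi
  obtain ⟨k, hk, hle⟩ := exists_mem_sgT_le hi hj (hs.lt_of_one_lt hphat h)
  exact ⟨k, hk, (hs.r_le_ratio_of_one_lt h).trans
    (div_le_div_of_nonneg_left (hphat _ _).le (hphat _ _) hle)⟩

theorem disjoint_select (hs : SGInvariant phat xhat γ s) (hq : q.2 ∉ sgAssigned s) :
    Pairwise (Function.onFun Disjoint (s.select phat q).J) := by
  intro i i' hne
  have hnew : ∀ k, q.2 ∉ s.J k := fun k hk => hq (mem_sgAssigned.2 ⟨k, hk⟩)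
  refine Finset.disjoint_left.2 fun j hj hj' => ?_
  rcases SGState.mem_select_J.1 hj with ⟨rfl, rfl⟩ | hold <;>
    rcases SGState.mem_select_J.1 hj' with ⟨rfl, hjq⟩ | hold'
  · exact hne rfl
  · exact hnew i' hold'
  · exact hnew i (hjq ▸ hold)
  · exact Finset.disjoint_left.1 (hs.disjoint hne) hold hold'

theorem notMem_sgI_select (hs : SGInvariant phat xhat γ s) (hphat : ∀ i j, 0 < phat i j)
    (hq : q ∈ sgT phat xhat γ s) (h : 1 < (s.select phat q).r i j)
    (hj : j ∈ sgAssigned (s.select phat q)) : i ∉ sgI phat xhat γ (s.select phat q) := by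
  have hr : 1 < s.r i j := h.trans_le (SGState.select_r_le (hs.one_le i j))
  suffices i ∉ sgI phat xhat γ s from
    fun hi => this (SGState.sgI_select_subset (fun i j => (hphat i j).le) hi)
  rcases SGState.mem_sgAssigned_select.1 hj with rfl | hold
  · obtain ⟨-, -, -, hmin⟩ := mem_sgT.1 hq
    exact fun hi => (hmin i hi (hs.lt_of_one_lt hphat hr)).not_gt (SGState.lt_of_one_lt_select_r h)
  · exact hs.notMem_sgI i j hr hold

theorem r_le_ratio_of_maximal (hs : SGInvariant phat xhat γ s) (hphat : ∀ i j, 0 < phat i j)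
    (hq : q ∈ sgT phat xhat γ s)
    (hmax : ∀ q' ∈ sgT phat xhat γ s,
      predictedRatio phat xhat q'.1 q'.2 ≤ predictedRatio phat xhat q.1 q.2) (k : Fin m) :
    s.r q.1 k ≤ predictedRatio phat xhat q.1 q.2 := by
  obtain ⟨-, hI, hlt, -⟩ := mem_sgT.1 hq
  rcases le_or_gt (s.r q.1 k) 1 with hle | hgt
  · exact hle.trans ((one_lt_div (hphat _ _)).2 hlt).le
  · obtain ⟨i, hi, hle⟩ := hs.exists_mem_sgT hphat hI hgt
    exact hle.trans (hmax _ hi)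

theorem step (hs : SGInvariant phat xhat γ s) (hphat : ∀ i j, 0 < phat i j)
    (h : SGStep phat xhat γ s s') : SGInvariant phat xhat γ s' := by
  obtain ⟨q, hq, hmax, rfl⟩ := h.exists_eq_select
  have hr_le : ∀ i j, (s.select phat q).r i j ≤ s.r i j :=
    fun i j => SGState.select_r_le (hs.one_le i j)
  refine ⟨hs.disjoint_select (mem_sgT.1 hq).1, fun i j => SGState.one_le_select_r (hs.one_le i j),
    fun i j => (hr_le i j).trans (hs.r_le_max i j), fun i j => hs.notMem_sgI_select hphat hq,
    fun i j k hj => (hr_le i k).trans ?_⟩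
  rcases SGState.mem_select_J.1 hj with ⟨rfl, rfl⟩ | hold
  · exact hs.r_le_ratio_of_maximal hphat hq hmax k
  · exact hs.r_le_ratio_of_mem i j k hold

theorem of_reachable (hphat : ∀ i j, 0 < phat i j)
    (h : Relation.ReflTransGen (SGStep phat xhat γ) (sgInit phat xhat) s) :
    SGInvariant phat xhat γ s := by
  induction h with
  | refl => exact init phat xhat γ
  | tail _ hstep ih => exact ih.step hphat hstep

theorem maxScalar_mul_le_sum [NeZero m] (hs : SGInvariant phat xhat γ s)
    (hphat : ∀ i j, 0 < phat i j) (hT : sgT phat xhat γ s = ∅) (hi : 1 < maxScalar s.r i) :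
    maxScalar s.r i * (γ * MS phat xhat) ≤ ∑ j ∈ s.J i, phat (xhat j) j := by
  obtain ⟨k, hk⟩ := exists_eq_maxScalar s.r i
  rw [← hk] at hi ⊢
  have hfull : γ * MS phat xhat ≤ ∑ j ∈ s.J i, phat i j := by
    by_contra! hlt
    obtain ⟨_, hmem, -⟩ := hs.exists_mem_sgT hphat (mem_sgI.2 hlt) hi
    simp [hT] at hmem
  calc s.r i k * (γ * MS phat xhat) ≤ s.r i k * ∑ j ∈ s.J i, phat i j :=
        mul_le_mul_of_nonneg_left hfull (zero_le_one.trans hi.le)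
    _ = ∑ j ∈ s.J i, s.r i k * phat i j := Finset.mul_sum _ _ _
    _ ≤ ∑ j ∈ s.J i, phat (xhat j) j := Finset.sum_le_sum fun j hj =>
        (le_div_iff₀ (hphat i j)).1 (hs.r_le_ratio_of_mem i j k hj)

end SGInvariant

theorem SGFinal.sum_maxScalar_le [NeZero m] (hs : SGFinal phat xhat γ s)
    (hphat : ∀ i j, 0 < phat i j) (hγ : 0 < γ) :
    ∑ i with 1 < maxScalar s.r i, maxScalar s.r i ≤ n / γ := by
  have hinv := SGInvariant.of_reachable hphat hs.1
  rw [le_div_iff₀ hγ]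
  refine le_of_mul_le_mul_right ?_ (MS_pos hphat xhat)
  rw [mul_assoc, Finset.sum_mul]
  calc ∑ i with 1 < maxScalar s.r i, maxScalar s.r i * (γ * MS phat xhat)
      ≤ ∑ i with 1 < maxScalar s.r i, ∑ j ∈ s.J i, phat (xhat j) j :=
        Finset.sum_le_sum fun i hi =>
          hinv.maxScalar_mul_le_sum hphat hs.2 (Finset.mem_filter.1 hi).2
    _ ≤ ∑ j, phat (xhat j) j :=
        sum_sum_le_sum_of_pairwise_disjoint hinv.disjoint (fun _ => (hphat _ _).le) _
    _ ≤ n * MS phat xhat := sum_le_card_mul_MS phat xhat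

theorem sgAssign_le (s : SGState n m) (xhat : Fin m → Fin n) (p : Fin n → Fin m → ℝ)
    (j : Fin m) (i : Fin n) :
    s.r (sgAssign s xhat p j) j * p (sgAssign s xhat p j) j ≤ s.r i j * p i j := by
  dsimp only [sgAssign]
  split_ifs with hxhat hJ
  · exact hxhat i
  · exact (Classical.choose_spec hJ).2 i
  · exact (Finset.mem_filter.1 (Finset.min'_mem _ (exists_argmin fun i => s.r i j * p i j))).2 i

end Loop

/-- If scalars `r(i,j) ≥ 1` satisfy `Σ_{i : max_j r(i,j) > 1} max_j r(i,j)
≤ n/γ`, then any allocation assigning each job to a machine minimizing `r(i,j)·p(i,j)` has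
makespan at most `(1 + 1/γ)·n·OPT(p)`. In particular, since the scalars of `ScaledGreedy` at
termination satisfy these conditions, `ScaledGreedy` is `(1+1/γ)n`-robust. -/
theorem sg_robustness [NeZero n] [NeZero m] (γ : ℝ) (hγ : 0 < γ) :
    (∀ p : Fin n → Fin m → ℝ, (∀ i j, 0 < p i j) →
      ∀ r : Fin n → Fin m → ℝ, (∀ i j, 1 ≤ r i j) →
      (∑ i ∈ Finset.univ.filter (fun i => 1 < maxScalar r i), maxScalar r i ≤ (n : ℝ) / γ) →
      ∀ x : Fin m → Fin n, (∀ j i, r (x j) j * p (x j) j ≤ r i j * p i j) →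
      MS p x ≤ (1 + 1 / γ) * n * OPT p)
    ∧
    (∀ (p phat : Fin n → Fin m → ℝ) (xhat : Fin m → Fin n) (s : SGState n m),
      (∀ i j, 0 < p i j) → (∀ i j, 0 < phat i j) → SGFinal phat xhat γ s →
      MS p (sgAssign s xhat p) ≤ (1 + 1 / γ) * n * OPT p) := by
  refine ⟨fun p hp r hr hsum x hx =>
    MS_le_mul_OPT_of_sum_maxScalar_le (fun i j => (hp i j).le) hr hsum hx, ?_⟩
  intro p phat xhat s hp hphat hs
  exact MS_le_mul_OPT_of_sum_maxScalar_le (fun i j => (hp i j).le)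
    (SGInvariant.of_reachable hphat hs.1).one_le (hs.sum_maxScalar_le hphat hγ)
    (sgAssign_le s xhat p)
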